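/- In every maximum b-matching f, every vertex i ∈ V^P satisfies x_i(f) = b_i, and f({i,j}) = 0 for every edge {i,j} of G with i ∈ V^P and j ∈ V^O. (Perfectly demanded vertices are saturated and exchange only among themselves in every Pareto-efficient b-matching.) -/

import Mathlib

variable {V : Type*} [Fintype V] [DecidableEq V]

/-- The utility of vertex `i` under the b-matching `f`: the total weight of edges incident to `i`. -/
def bmUtil (G : SimpleGraph V) [DecidableRel G.Adj] (f : Sym2 V → ℕ) (i : V) : ℕ :=
  ∑ e ∈ G.edgeFinset.filter (fun e => i ∈ e), f e

/-- `f` is a feasible b-matching for `(G, b)`. -/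
def BMFeasible (G : SimpleGraph V) [DecidableRel G.Adj] (b : V → ℕ) (f : Sym2 V → ℕ) : Prop :=
  ∀ i, bmUtil G f i ≤ b i

/-- The size of a b-matching: the total weight over all edges. -/
def bmSize (G : SimpleGraph V) [DecidableRel G.Adj] (f : Sym2 V → ℕ) : ℕ :=
  ∑ e ∈ G.edgeFinset, f e

/-- `f` is a maximum b-matching for `(G, b)`. -/
def IsMaxBM (G : SimpleGraph V) [DecidableRel G.Adj] (b : V → ℕ) (f : Sym2 V → ℕ) : Prop :=
  BMFeasible G b f ∧ ∀ g, BMFeasible G b g → bmSize G g ≤ bmSize G f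

/-- Underdemanded vertices: unsaturated in at least one maximum b-matching. -/
def VU (G : SimpleGraph V) [DecidableRel G.Adj] (b : V → ℕ) : Set V :=
  {i | ∃ f, IsMaxBM G b f ∧ bmUtil G f i < b i}

/-- Overdemanded vertices: not underdemanded, with at least one underdemanded neighbor. -/
def VO (G : SimpleGraph V) [DecidableRel G.Adj] (b : V → ℕ) : Set V :=
  {i | i ∉ VU G b ∧ ∃ j ∈ VU G b, G.Adj i j}

/-- Perfectly demanded vertices. -/
def VP (G : SimpleGraph V) [DecidableRel G.Adj] (b : V → ℕ) : Set V :=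
  {i | i ∉ VU G b ∧ i ∉ VO G b}

/-- indicator of an edge -/
def bmInd (a : Sym2 V) (e : Sym2 V) : ℕ := if e = a then 1 else 0

theorem bmInd_self (a : Sym2 V) : bmInd a a = 1 := by simp [bmInd]

theorem bmSize_add (G : SimpleGraph V) [DecidableRel G.Adj] (f g : Sym2 V → ℕ) :
    bmSize G (fun e => f e + g e) = bmSize G f + bmSize G g := by
  simp [bmSize, Finset.sum_add_distrib]

theorem bmUtil_add (G : SimpleGraph V) [DecidableRel G.Adj] (f g : Sym2 V → ℕ) (z : V) :
    bmUtil G (fun e => f e + g e) z = bmUtil G f z + bmUtil G g z := by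
  simp [bmUtil, Finset.sum_add_distrib]

theorem bmSize_ind (G : SimpleGraph V) [DecidableRel G.Adj] {u v : V} (h : G.Adj u v) :
    bmSize G (bmInd s(u, v)) = 1 := by
  simp [bmSize, bmInd, h]

theorem bmUtil_ind (G : SimpleGraph V) [DecidableRel G.Adj] {u v : V} (h : G.Adj u v) (z : V) :
    bmUtil G (bmInd s(u, v)) z = (if z = u then 1 else 0) + (if z = v then 1 else 0) := by
  have hne := h.ne
  simp only [bmUtil, bmInd, Finset.sum_ite_eq', Finset.mem_filter, SimpleGraph.mem_edgeFinset,
    SimpleGraph.mem_edgeSet, h, true_and, Sym2.mem_iff]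
  grind

/-- move one unit from edge `a v` to edge `v c` -/
def bmShift (f : Sym2 V → ℕ) (a v c : V) (e : Sym2 V) : ℕ :=
  f e + bmInd s(v, c) e - bmInd s(a, v) e

theorem bmShift_add (f : Sym2 V → ℕ) (a v c : V) (h : 0 < f s(a, v)) :
    (fun e => bmShift f a v c e + bmInd s(a, v) e) = (fun e => f e + bmInd s(v, c) e) := by
  funext e
  simp only [bmShift, bmInd]
  by_cases he : e = s(a, v)
  · subst he
    simp only [if_true]
    omega
  · simp [he]

theorem bmShift_util (G : SimpleGraph V) [DecidableRel G.Adj] (f : Sym2 V → ℕ) {a v c : V}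
    (h : 0 < f s(a, v)) (hav : G.Adj a v) (hvc : G.Adj v c) (z : V) :
    bmUtil G (bmShift f a v c) z + (if z = a then 1 else 0)
      = bmUtil G f z + (if z = c then 1 else 0) := by
  have := congrArg (fun k => bmUtil G k z) (bmShift_add f a v c h)
  simp only [bmUtil_add, bmUtil_ind G hav, bmUtil_ind G hvc] at this
  omega

theorem bmShift_size (G : SimpleGraph V) [DecidableRel G.Adj] (f : Sym2 V → ℕ) {a v c : V}
    (h : 0 < f s(a, v)) (hav : G.Adj a v) (hvc : G.Adj v c) :
    bmSize G (bmShift f a v c) = bmSize G f := by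
  have := congrArg (fun k => bmSize G k) (bmShift_add f a v c h)
  simp only [bmSize_add, bmSize_ind G hav, bmSize_ind G hvc] at this
  omega

theorem bmShift_max (G : SimpleGraph V) [DecidableRel G.Adj] (b : V → ℕ) (f : Sym2 V → ℕ)
    (hf : IsMaxBM G b f) {a v c : V}
    (h : 0 < f s(a, v)) (hav : G.Adj a v) (hvc : G.Adj v c) (hc : bmUtil G f c < b c) :
    IsMaxBM G b (bmShift f a v c) := by
  refine ⟨fun z => ?_, fun g hg => ?_⟩
  · have h1 := bmShift_util G f h hav hvc z
    have h2 := hf.1 z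
    by_cases hz : z = c
    · subst hz
      simp only [if_true] at h1
      omega
    · simp only [hz, if_false] at h1
      omega
  · rw [bmShift_size G f h hav hvc]
    exact hf.2 g hg

theorem bm_exists_gt (G : SimpleGraph V) [DecidableRel G.Adj] (f g : Sym2 V → ℕ) (u : V)
    (h : bmUtil G g u < bmUtil G f u) : ∃ v, G.Adj u v ∧ g s(u, v) < f s(u, v) := by
  obtain ⟨e, he, hlt⟩ := Finset.exists_lt_of_sum_lt h
  simp only [Finset.mem_filter, SimpleGraph.mem_edgeFinset] at he
  obtain ⟨v, rfl⟩ := he.2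
  exact ⟨v, he.1, hlt⟩

theorem bm_exists_gt' (G : SimpleGraph V) [DecidableRel G.Adj] (f g : Sym2 V → ℕ) (v u : V)
    (huv : G.Adj u v) (hlt : g s(u, v) < f s(u, v))
    (h : bmUtil G f v ≤ bmUtil G g v) : ∃ w, G.Adj v w ∧ f s(v, w) < g s(v, w) := by
  by_contra! hcon
  have : bmUtil G g v < bmUtil G f v := by
    apply Finset.sum_lt_sum
    · intro e he
      simp only [Finset.mem_filter, SimpleGraph.mem_edgeFinset] at he
      obtain ⟨w, rfl⟩ := he.2
      exact hcon w he.1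
    · exact ⟨s(u, v), by simp [huv], hlt⟩
  omega

/-- The alternating path argument. -/
theorem bm_path (G : SimpleGraph V) [DecidableRel G.Adj] (b : V → ℕ)
    (f : Sym2 V → ℕ) (hf : IsMaxBM G b f) (i j : V) (hi : i ∉ VU G b) (hj : j ∉ VU G b) :
    ∀ (n : ℕ) (g : Sym2 V → ℕ) (u : V), IsMaxBM G b g → bmUtil G g u < b u →
      ∑ e ∈ G.edgeFinset, (f e - g e) ≤ n →
      ∃ (h : Sym2 V → ℕ) (w : V), IsMaxBM G b h ∧ bmUtil G f w < b w ∧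
        (∀ z, bmUtil G h z + (if z = w then 1 else 0) = bmUtil G g z + (if z = u then 1 else 0)) ∧
        h s(i, j) ≤ g s(i, j) ∧ ∀ e, h e ≤ max (f e) (g e) := by
  intro n
  induction n with
  | zero =>
    intro g u hg hu hn
    by_cases hfu : bmUtil G f u < b u
    · exact ⟨g, u, hg, hfu, fun z => rfl, le_rfl, fun e => le_max_right _ _⟩
    obtain ⟨v, huv, hlt⟩ := bm_exists_gt G f g u (by omega)
    have h1 := Finset.single_le_sum (f := fun e => f e - g e) (fun _ _ => Nat.zero_le _)
      (SimpleGraph.mem_edgeFinset.2 ((SimpleGraph.mem_edgeSet G).2 huv))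
    omega
  | succ n ih =>
    intro g u hg hu hn
    by_cases hfu : bmUtil G f u < b u
    · exact ⟨g, u, hg, hfu, fun z => rfl, le_rfl, fun e => le_max_right _ _⟩
    obtain ⟨v, huv, hlt⟩ := bm_exists_gt G f g u (by omega)
    have hv : b v ≤ bmUtil G g v := by
      by_contra! hv
      have := hg.2 (fun e => g e + bmInd s(u, v) e) (by
        intro z
        rw [bmUtil_add, bmUtil_ind G huv]
        have h2 := hg.1 z
        have h3 := huv.ne
        by_cases hzu : z = u
        · subst hzu
          simp only [if_true, h3, if_false]
          omega
        · by_cases hzv : z = v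
          · subst hzv
            simp only [if_true, hzu, if_false]
            omega
          · simp only [hzu, hzv, if_false]
            omega)
      rw [bmSize_add, bmSize_ind G huv] at this
      omega
    obtain ⟨w, hvw, hlt2⟩ := bm_exists_gt' G f g v u huv hlt ((hf.1 v).trans hv)
    have hlt3 : f s(w, v) < g s(w, v) := by rwa [Sym2.eq_swap]
    have hpos : 0 < g s(w, v) := by omega
    have hne : s(w, v) ≠ s(v, u) := by
      intro h
      rw [h, Sym2.eq_swap] at hlt3
      omega
    have hval : ∀ e, (bmShift g w v u e = g e ∧ e ≠ s(v, u)) ∨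
        (e = s(v, u) ∧ bmShift g w v u e = g e + 1 ∧ g e < f e) ∨
        (e ≠ s(v, u) ∧ bmShift g w v u e + 1 = g e ∧ f e < g e) := by
      intro e
      by_cases h1 : e = s(v, u)
      · right; left
        subst h1
        refine ⟨rfl, ?_, ?_⟩
        · simp [bmShift, bmInd, hne.symm]
        · rwa [Sym2.eq_swap]
      · by_cases h2 : e = s(w, v)
        · right; right
          refine ⟨h1, ?_, ?_⟩
          · subst h2
            simp only [bmShift, bmInd, h1, if_false, if_true]
            omega
          · rwa [h2]
        · left
          exact ⟨by simp [bmShift, bmInd, h1, h2], h1⟩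
    have hmax := bmShift_max G b g hg hpos hvw.symm huv.symm hu
    have hutil := bmShift_util G g hpos hvw.symm huv.symm
    have hwu : w ≠ u := by
      rintro rfl
      omega
    have hw : bmUtil G (bmShift g w v u) w < b w := by
      have h1 := hutil w
      have h2 := hg.1 w
      simp only [if_true, hwu, if_false] at h1
      omega
    have hsum : ∑ e ∈ G.edgeFinset, (f e - bmShift g w v u e) ≤ n := by
      have : ∑ e ∈ G.edgeFinset, (f e - bmShift g w v u e)
          < ∑ e ∈ G.edgeFinset, (f e - g e) := by
        apply Finset.sum_lt_sum
        · intro e _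
          rcases hval e with h | h | h <;> omega
        · refine ⟨s(v, u), by simp [huv.symm], ?_⟩
          rcases hval s(v, u) with h | h | h
          · exact absurd rfl h.2
          · omega
          · exact absurd rfl h.1
      omega
    obtain ⟨h, x, hh, hx, hux, hij, hle⟩ := ih _ w hmax hw hsum
    refine ⟨h, x, hh, hx, fun z => ?_, ?_, fun e => ?_⟩
    · have h1 := hux z
      have h2 := hutil z
      omega
    · have hune : s(i, j) ≠ s(v, u) := by
        intro heq
        have huU : u ∈ VU G b := ⟨g, hg, hu⟩
        have : u ∈ s(i, j) := by rw [heq]; simp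
        rcases Sym2.mem_iff.1 this with h | h
        · exact hi (h ▸ huU)
        · exact hj (h ▸ huU)
      rcases hval s(i, j) with h | h | h
      · omega
      · exact absurd h.1 hune
      · omega
    · have h1 := hle e
      rcases hval e with h | h | h <;> omega

/-- in every maximum b-matching, every perfectly demanded vertex is saturated and
sends nothing to overdemanded vertices. -/
theorem stmt_6 (G : SimpleGraph V) [DecidableRel G.Adj] (b : V → ℕ)
    (f : Sym2 V → ℕ) (hf : IsMaxBM G b f) :
    (∀ i ∈ VP G b, bmUtil G f i = b i) ∧
    (∀ i j, i ∈ VP G b → j ∈ VO G b → G.Adj i j → f s(i, j) = 0) := by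
  refine ⟨fun i hi => ?_, fun i j hi hj hij => ?_⟩
  · by_contra hne
    exact hi.1 ⟨f, hf, lt_of_le_of_ne (hf.1 i) hne⟩
  · by_contra hpos
    obtain ⟨hjU, u, ⟨g, hg, hgu⟩, hju⟩ := hj
    have hiU := hi.1
    obtain ⟨h, w, hh, hw, hut, hle, hmx⟩ :=
      bm_path G b f hf i j hiU hjU _ g u hg hgu le_rfl
    let k : Sym2 V → ℕ := fun e => f e + g e - h e
    have hk : (fun e => k e + h e) = (fun e => f e + g e) := by
      funext e
      have := hmx e
      simp only [k]
      omega
    have hkU : ∀ z, bmUtil G k z + (if z = u then 1 else 0)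
        = bmUtil G f z + (if z = w then 1 else 0) := by
      intro z
      have h1 := congrArg (fun q => bmUtil G q z) hk
      simp only [bmUtil_add] at h1
      have h2 := hut z
      omega
    have hkS : bmSize G k = bmSize G f := by
      have h1 := congrArg (fun q => bmSize G q) hk
      simp only [bmSize_add] at h1
      have h2 := hg.2 h hh.1
      have h3 := hh.2 g hg.1
      omega
    have hkM : IsMaxBM G b k := by
      refine ⟨fun z => ?_, fun q hq => hkS ▸ hf.2 q hq⟩
      have h1 := hkU z
      have h2 := hf.1 z
      by_cases hz : z = w
      · subst hz
        simp only [if_true] at h1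
        omega
      · simp only [hz, if_false] at h1
        omega
    have hku : bmUtil G k u < b u := by
      have h1 := hkU u
      have h2 := hf.1 u
      by_cases hz : u = w
      · subst hz
        simp only [if_true] at h1
        omega
      · simp only [hz, if_false, if_true] at h1
        omega
    have hkp : 0 < k s(i, j) := by
      simp only [k]
      omega
    have hiu : i ≠ u := by
      rintro rfl
      exact hiU ⟨g, hg, hgu⟩
    refine hiU ⟨bmShift k i j u, bmShift_max G b k hkM hkp hij hju hku, ?_⟩
    have h1 := bmShift_util G k hkp hij hju i
    have h2 := hkM.1 i
    simp only [if_true, hiu, if_false] at h1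
    omega
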